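/- With a(n) = f_n(A_n) the size of the even set-alternating domain, the limit as n → ∞ of a(n)^{1/n} exists and equals √(2 + 2√2) ≈ 2.1973. In particular, for every real c with 0 < c < √(2 + 2√2) there is N such that a(n) > c^n for all n ≥ N. -/

import Mathlib

/-- `σ` is in the set-alternating domain of `A` on alternatives `{1,…,n}`
(alternative `m` is represented by the index `m-1 : Fin n`; `σ x` is the rank
of alternative `x`, smaller rank = better). For every triple `i < j < k`:
if the middle alternative `j` (whose 1-based name is `j+1`) is in `A`, then
`i` is never ranked below both `j` and `k` (1N3); otherwise `k` is never
ranked above both `i` and `j` (3N1). -/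
def inSetAltDomain (n : ℕ) (A : Finset ℕ) (σ : Equiv.Perm (Fin n)) : Prop :=
  ∀ i j k : Fin n, i < j → j < k →
    (((j : ℕ) + 1 ∈ A) → ¬ (σ j < σ i ∧ σ k < σ i)) ∧
    (((j : ℕ) + 1 ∉ A) → ¬ (σ k < σ i ∧ σ k < σ j))

/-- The set-alternating domain `D_n(A)`. -/
def setAltDomain (n : ℕ) (A : Finset ℕ) : Set (Equiv.Perm (Fin n)) :=
  {σ | inSetAltDomain n A σ}

/-- `f_n(A)`, the cardinality of `D_n(A)`. -/
noncomputable def fsize (n : ℕ) (A : Finset ℕ) : ℕ := (setAltDomain n A).ncard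

/-- The even set-alternating scheme: even numbers `2 ≤ j ≤ n-2` (`n` even) or
`2 ≤ j ≤ n-1` (`n` odd). -/
def evenA (n : ℕ) : Finset ℕ :=
  if Even n then (Finset.Icc 2 (n-2)).filter (fun j => Even j)
  else (Finset.Icc 2 (n-1)).filter (fun j => Even j)

/-- `a(n) = f_n(A_n)`, the size of the even set-alternating domain. -/
noncomputable def aseq (n : ℕ) : ℕ := fsize n (evenA n)

/-- parity form of the domain -/
def DD (n : ℕ) (σ : Equiv.Perm (Fin n)) : Prop :=
  ∀ i j k : Fin n, i < j → j < k →
    ((Odd (j : ℕ)) → ¬ (σ j < σ i ∧ σ k < σ i)) ∧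
    ((¬ Odd (j : ℕ)) → ¬ (σ k < σ i ∧ σ k < σ j))

/-- a new alternative may be inserted at rank `p` -/
def VV (n : ℕ) (σ : Equiv.Perm (Fin n)) (p : ℕ) : Prop :=
  ∀ i j : Fin n, i < j →
    ((Odd (j : ℕ)) → ¬ (σ j < σ i ∧ p ≤ (σ i : ℕ))) ∧
    ((¬ Odd (j : ℕ)) → ¬ (p ≤ (σ i : ℕ) ∧ p ≤ (σ j : ℕ)))

lemma VV_top (n : ℕ) (σ : Equiv.Perm (Fin n)) : VV n σ n := by
  intro i j _
  have := (σ i).isLt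
  exact ⟨fun _ h => by omega, fun _ h => by omega⟩

lemma VV_mono (n : ℕ) (σ : Equiv.Perm (Fin n)) {p q : ℕ} (hpq : p ≤ q) (h : VV n σ p) :
    VV n σ q := by
  intro i j hij
  obtain ⟨h1, h2⟩ := h i j hij
  exact ⟨fun ho hh => h1 ho ⟨hh.1, hpq.trans hh.2⟩,
    fun ho hh => h2 ho ⟨hpq.trans hh.1, hpq.trans hh.2⟩⟩

open Classical in
/-- the state -/
noncomputable def LL (n : ℕ) (σ : Equiv.Perm (Fin n)) : ℕ :=
  n - Nat.find (⟨n, VV_top n σ⟩ : ∃ p, VV n σ p)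

lemma LL_le (n : ℕ) (σ : Equiv.Perm (Fin n)) : LL n σ ≤ n := Nat.sub_le _ _

lemma VV_iff (n : ℕ) (σ : Equiv.Perm (Fin n)) (p : ℕ) :
    VV n σ p ↔ n ≤ p + LL n σ := by
  classical
  have hex : ∃ p, VV n σ p := ⟨n, VV_top n σ⟩
  have hle : Nat.find hex ≤ n := Nat.find_min' hex (VV_top n σ)
  have hL : LL n σ = n - Nat.find hex := rfl
  constructor
  · intro h
    have := Nat.find_min' hex h
    omega
  · intro h
    exact VV_mono n σ (by omega) (Nat.find_spec hex)

lemma LL_eq (n : ℕ) (σ : Equiv.Perm (Fin n)) (k : ℕ) (hk : k ≤ n)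
    (h : ∀ p ≤ n, (VV n σ p ↔ n ≤ p + k)) : LL n σ = k := by
  have h1 := (VV_iff n σ (n - k)).1 ((h (n - k) (by omega)).2 (by omega))
  have hl := LL_le n σ
  have h2 := (h (n - LL n σ) (by omega)).1 ((VV_iff n σ (n - LL n σ)).2 (by omega))
  omega

/-- insertion of the last alternative at rank `p` -/
def ins (n : ℕ) (p : Fin (n+1)) (τ : Equiv.Perm (Fin n)) : Equiv.Perm (Fin (n+1)) :=
  finSuccEquivLast.trans ((Equiv.optionCongr τ).trans (finSuccEquiv' p).symm)

lemma ins_last (n : ℕ) (p : Fin (n+1)) (τ : Equiv.Perm (Fin n)) :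
    ins n p τ (Fin.last n) = p := by
  simp [ins]

lemma ins_castSucc (n : ℕ) (p : Fin (n+1)) (τ : Equiv.Perm (Fin n)) (i : Fin n) :
    ins n p τ i.castSucc = p.succAbove (τ i) := by
  simp [ins]

lemma ins_bij (n : ℕ) : Function.Bijective
    (fun x : Equiv.Perm (Fin n) × Fin (n+1) => ins n x.2 x.1) := by
  rw [Fintype.bijective_iff_injective_and_card]
  constructor
  · rintro ⟨τ, p⟩ ⟨τ₂, p₂⟩ h
    simp only at h
    have hp : p = p₂ := by rw [← ins_last n p τ, h, ins_last]
    subst hp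
    have : τ = τ₂ := by
      ext i
      have := ins_castSucc n p τ i
      rw [h, ins_castSucc] at this
      rw [Fin.succAbove_right_injective this]
    rw [this]
  · simp [Fintype.card_perm, Nat.factorial_succ, mul_comm]

lemma sA_val (n : ℕ) (p : Fin (n+1)) (a : Fin n) :
    ((p.succAbove a : Fin (n+1)) : ℕ) = if (a:ℕ) < p then (a:ℕ) else a + 1 := by
  unfold Fin.succAbove
  simp only [Fin.lt_def, Fin.val_castSucc]
  split_ifs <;> simp

lemma DD_ins (n : ℕ) (p : Fin (n+1)) (τ : Equiv.Perm (Fin n)) :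
    DD (n+1) (ins n p τ) ↔ DD n τ ∧ VV n τ p := by
  have hlt : ∀ a b : Fin n, (p.succAbove a < p.succAbove b ↔ a < b) := fun a b =>
    (Fin.strictMono_succAbove p).lt_iff_lt
  have hlp : ∀ a : Fin n, (p < p.succAbove a ↔ (p:ℕ) ≤ a) := fun a => by
    rw [Fin.lt_def, sA_val]; split_ifs <;> omega
  constructor
  · intro h
    constructor
    · intro i j k hij hjk
      have := h i.castSucc j.castSucc k.castSucc (by simpa using hij) (by simpa using hjk)
      simpa only [ins_castSucc, hlt, Fin.val_castSucc] using this
    · intro i j hij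
      have := h i.castSucc j.castSucc (Fin.last n) (by simpa using hij) (Fin.castSucc_lt_last j)
      simpa only [ins_castSucc, ins_last, hlt, hlp, Fin.val_castSucc] using this
  · rintro ⟨h1, h2⟩ i j k hij hjk
    induction k using Fin.lastCases with
    | last =>
      induction j using Fin.lastCases with
      | last => exact absurd hjk (lt_irrefl _)
      | cast j =>
        induction i using Fin.lastCases with
        | last => exact absurd (hij.trans hjk) (lt_irrefl _)
        | cast i =>
          have := h2 i j (by simpa using hij)
          simpa only [ins_castSucc, ins_last, hlt, hlp, Fin.val_castSucc] using this
    | cast k =>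
      induction j using Fin.lastCases with
      | last => exact absurd (hjk.trans (Fin.castSucc_lt_last k)) (lt_irrefl _)
      | cast j =>
        induction i using Fin.lastCases with
        | last => exact absurd (hij.trans (Fin.castSucc_lt_last j)) (lt_irrefl _)
        | cast i =>
          have := h1 i j k (by simpa using hij) (by simpa using hjk)
          simpa only [ins_castSucc, hlt, Fin.val_castSucc] using this

lemma VV_ins (n : ℕ) (p : Fin (n+1)) (τ : Equiv.Perm (Fin n)) (q : ℕ) :
    VV (n+1) (ins n p τ) q ↔
      VV n τ (if q ≤ p then q else q - 1) ∧
      (Odd n → ∀ a : Fin n, ¬ ((p:ℕ) ≤ a ∧ q ≤ p.succAbove a)) ∧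
      (¬ Odd n → ∀ a : Fin n, ¬ (q ≤ (p.succAbove a : ℕ) ∧ q ≤ p)) := by
  have hlt : ∀ a b : Fin n, (p.succAbove a < p.succAbove b ↔ a < b) := fun a b =>
    (Fin.strictMono_succAbove p).lt_iff_lt
  have hlp : ∀ a : Fin n, (p < p.succAbove a ↔ (p:ℕ) ≤ a) := fun a => by
    rw [Fin.lt_def, sA_val]; split_ifs <;> omega
  have hq : ∀ a : Fin n, (q ≤ (p.succAbove a : ℕ) ↔ (if q ≤ p then q else q - 1) ≤ (a:ℕ)) :=
    fun a => by rw [sA_val]; split_ifs <;> omega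
  constructor
  · intro h
    refine ⟨?_, ?_, ?_⟩
    · intro i j hij
      have := h i.castSucc j.castSucc (by simpa using hij)
      simpa only [ins_castSucc, hlt, Fin.val_castSucc, hq] using this
    · intro ho a
      have := (h (τ.symm a).castSucc (Fin.last n) (Fin.castSucc_lt_last _)).1 (by simpa using ho)
      simpa only [ins_castSucc, ins_last, hlp, Equiv.apply_symm_apply] using this
    · intro ho a
      have := (h (τ.symm a).castSucc (Fin.last n) (Fin.castSucc_lt_last _)).2 (by simpa using ho)
      simpa only [ins_castSucc, ins_last, hlp, Equiv.apply_symm_apply] using this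
  · rintro ⟨h1, h2, h3⟩ i j hij
    induction j using Fin.lastCases with
    | last =>
      induction i using Fin.lastCases with
      | last => exact absurd hij (lt_irrefl _)
      | cast i =>
        have hh2 := fun ho => h2 ho (τ i)
        have hh3 := fun ho => h3 ho (τ i)
        simp only [ins_castSucc, ins_last, hlp, Fin.val_last]
        exact ⟨hh2, hh3⟩
    | cast j =>
      induction i using Fin.lastCases with
      | last => exact absurd (hij.trans (Fin.castSucc_lt_last j)) (lt_irrefl _)
      | cast i =>
        have := h1 i j (by simpa using hij)
        simpa only [ins_castSucc, hlt, Fin.val_castSucc, hq] using this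

lemma LL_ins_odd (n : ℕ) (ho : Odd n) (p : Fin (n+1)) (τ : Equiv.Perm (Fin n)) :
    LL (n+1) (ins n p τ) = if n - (p:ℕ) = 0 then LL n τ + 1 else 0 := by
  have hl := LL_le n τ
  have hp := p.isLt
  split_ifs with h
  · apply LL_eq _ _ _ (by omega)
    intro q hq
    rw [VV_ins, VV_iff]
    constructor
    · rintro ⟨h1, -, -⟩
      split_ifs at h1 <;> omega
    · intro h1
      refine ⟨by split_ifs <;> omega, fun _ a => ?_, fun h => absurd ho h⟩
      have := a.isLt
      omega
  · apply LL_eq _ _ _ (by omega)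
    intro q hq
    rw [VV_ins, VV_iff]
    constructor
    · rintro ⟨-, h2, -⟩
      have := h2 ho ⟨n - 1, by omega⟩
      rw [sA_val] at this
      simp only at this
      split_ifs at this <;> omega
    · intro h1
      refine ⟨by split_ifs <;> omega, fun _ a => ?_, fun h => absurd ho h⟩
      have := a.isLt
      rw [sA_val]
      split_ifs <;> omega

lemma LL_ins_even (n : ℕ) (ho : ¬ Odd n) (p : Fin (n+1)) (τ : Equiv.Perm (Fin n))
    (hv : VV n τ p) :
    LL (n+1) (ins n p τ) = if n - (p:ℕ) = 0 then 1 else n - p := by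
  have hl := LL_le n τ
  have hp := p.isLt
  rw [VV_iff] at hv
  split_ifs with h
  · apply LL_eq _ _ _ (by omega)
    intro q hq
    rw [VV_ins, VV_iff]
    constructor
    · rintro ⟨-, -, h3⟩
      by_contra hc
      have := h3 ho ⟨n - 1, by omega⟩
      rw [sA_val] at this
      simp only at this
      split_ifs at this <;> omega
    · intro h1
      refine ⟨by split_ifs <;> omega, fun h => absurd h ho, fun _ a => ?_⟩
      have := a.isLt
      rw [sA_val]
      split_ifs <;> omega
  · apply LL_eq _ _ _ (by omega)
    intro q hq
    rw [VV_ins, VV_iff]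
    constructor
    · rintro ⟨-, -, h3⟩
      by_contra hc
      have := h3 ho ⟨n - 1, by omega⟩
      rw [sA_val] at this
      simp only at this
      split_ifs at this <;> omega
    · intro h1
      refine ⟨by split_ifs <;> omega, fun h => absurd h ho, fun _ a => ?_⟩
      have := a.isLt
      rw [sA_val]
      split_ifs <;> omega

open Classical in
/-- weighted sum over the domain -/
noncomputable def SS (n : ℕ) (w : ℕ → ℝ) : ℝ :=
  ∑ σ : Equiv.Perm (Fin n), if DD n σ then w (LL n σ) else 0

/-- the transfer operator -/
noncomputable def MM (n : ℕ) (w : ℕ → ℝ) (L : ℕ) : ℝ :=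
  if Odd n then w (L+1) + L * w 0 else w 1 + ∑ k ∈ Finset.range L, w (k+1)

lemma sum_aux (n L : ℕ) (hL : L ≤ n) (f : ℕ → ℝ) :
    (∑ p : Fin (n+1), if n ≤ (p:ℕ) + L then f (n - p) else 0)
      = f 0 + ∑ k ∈ Finset.range L, f (k+1) := by
  rw [Fin.sum_univ_eq_sum_range (fun p => if n ≤ p + L then f (n - p) else 0) (n+1),
    ← Finset.sum_range_reflect]
  have : ∀ j ∈ Finset.range (n+1), (if n ≤ (n + 1 - 1 - j) + L then f (n - (n+1-1-j)) else 0)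
      = if j ∈ Finset.range (L+1) then f j else 0 := by
    intro j hj
    rw [Finset.mem_range] at hj
    rw [show n - (n + 1 - 1 - j) = j by omega]
    simp only [Finset.mem_range]
    congr 1
    simp only [eq_iff_iff]
    omega
  rw [Finset.sum_congr rfl this, ← Finset.sum_filter, Finset.filter_mem_eq_inter,
    Finset.inter_eq_right.2 (Finset.range_subset_range.2 (by omega)), Finset.sum_range_succ', add_comm]

lemma SS_succ (n : ℕ) (w : ℕ → ℝ) : SS (n+1) w = SS n (MM n w) := by
  classical
  unfold SS
  rw [← (Equiv.ofBijective _ (ins_bij n)).sum_comp, Fintype.sum_prod_type]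
  refine Finset.sum_congr rfl fun τ _ => ?_
  simp only [Equiv.ofBijective_apply, DD_ins]
  by_cases hD : DD n τ
  · simp only [hD, true_and, if_true]
    unfold MM
    split_ifs with ho
    · have := sum_aux n (LL n τ) (LL_le n τ) (fun k => w (if k = 0 then LL n τ + 1 else 0))
      simp only [Nat.add_eq_zero_iff, one_ne_zero, and_false, if_false, if_true,
        Finset.sum_const, Finset.card_range, nsmul_eq_mul] at this
      rw [← this]
      refine Finset.sum_congr rfl fun p _ => ?_
      by_cases hv : VV n τ p
      · rw [if_pos hv, if_pos ((VV_iff _ _ _).1 hv), LL_ins_odd n ho p τ]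
      · rw [if_neg hv, if_neg (fun h => hv ((VV_iff _ _ _).2 h))]
    · have := sum_aux n (LL n τ) (LL_le n τ) (fun k => w (if k = 0 then 1 else k))
      simp only [Nat.add_eq_zero_iff, one_ne_zero, and_false, if_false, if_true] at this
      rw [← this]
      refine Finset.sum_congr rfl fun p _ => ?_
      by_cases hv : VV n τ p
      · rw [if_pos hv, if_pos ((VV_iff _ _ _).1 hv), LL_ins_even n ho p τ hv]
      · rw [if_neg hv, if_neg (fun h => hv ((VV_iff _ _ _).2 h))]
  · simp [hD]

lemma SS_mono (n : ℕ) {w v : ℕ → ℝ} (h : ∀ L, w L ≤ v L) : SS n w ≤ SS n v := by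
  classical
  unfold SS
  refine Finset.sum_le_sum fun σ _ => ?_
  split_ifs
  · exact h _
  · exact le_rfl

lemma SS_smul (n : ℕ) (c : ℝ) (w : ℕ → ℝ) : SS n (fun L => c * w L) = c * SS n w := by
  classical
  unfold SS
  rw [Finset.mul_sum]
  refine Finset.sum_congr rfl fun σ _ => ?_
  split_ifs <;> simp

lemma SS_one (w : ℕ → ℝ) : SS 1 w = w 1 := by
  classical
  rw [SS_succ]
  have hd : ∀ σ : Equiv.Perm (Fin 0), DD 0 σ := fun σ i => i.elim0
  have hl : ∀ σ : Equiv.Perm (Fin 0), LL 0 σ = 0 := fun σ => Nat.le_zero.1 (LL_le 0 σ)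
  simp [SS, hd, hl, MM]

lemma aseq_eq (n : ℕ) : (aseq n : ℝ) = SS n (fun _ => 1) := by
  classical
  have hset : setAltDomain n (evenA n) = {σ | DD n σ} := by
    ext σ
    simp only [setAltDomain, inSetAltDomain, DD, Set.mem_ofPred_eq]
    refine forall_congr' fun i => forall_congr' fun j => forall_congr' fun k =>
      forall_congr' fun hij => forall_congr' fun hjk => ?_
    have : ((j:ℕ) + 1 ∈ evenA n) ↔ Odd (j:ℕ) := by
      have hk := k.isLt
      have hjkv : (j:ℕ) < k := hjk
      have hijv : (i:ℕ) < j := hij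
      unfold evenA
      split_ifs with he <;>
      · simp only [Finset.mem_filter, Finset.mem_Icc, Nat.even_iff, Nat.odd_iff] at *
        omega
    rw [this]
  unfold aseq fsize SS
  rw [hset, Set.ncard_eq_toFinset_card', Set.toFinset_ofPred, Finset.card_filter]
  push_cast
  rfl

lemma MM_two (n : ℕ) (ho : Odd n) (w : ℕ → ℝ) (L : ℕ) :
    MM n (MM (n+1) w) L = L * w 1 + w 1 + ∑ k ∈ Finset.range (L+1), w (k+1) := by
  have : ¬ Odd (n+1) := by rw [Nat.not_odd_iff_even]; exact ho.add_one
  simp [MM, ho, this]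
  ring

/-- explicit eigenfunction -/
lemma eig (x z α β d : ℝ) (hxz : x * z = x + z) (h0 : x * z * (α + β - d) = 2 * d)
    (h1 : α * x + β * z = 2 * d) (n : ℕ) (ho : Odd n) (L : ℕ) :
    MM n (MM (n+1) (fun L => α * x ^ L + β * z ^ L - d)) L
      = (x * z) * (α * x ^ L + β * z ^ L - d) := by
  rw [MM_two n ho]
  induction L with
  | zero => simp; linarith
  | succ L ih =>
    rw [Finset.sum_range_succ]
    push_cast
    have e : (x * z) * (α * x ^ (L+1) + β * z ^ (L+1) - d) -
      (x * z) * (α * x ^ L + β * z ^ L - d) = d + (α * x ^ (L+2) + β * z ^ (L+2) - d) := by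
      have : x ^ 2 = x * z * x - x * z := by rw [hxz]; linear_combination -hxz
      have h2 : z ^ 2 = x * z * z - x * z := by rw [hxz]; linear_combination -hxz
      rw [pow_add x L 2, pow_add z L 2, this, h2]; ring
    simp only [pow_one, zero_add] at *
    linarith

lemma aseq_succ_le (n : ℕ) : aseq n ≤ aseq (n+1) := by
  have : (aseq n : ℝ) ≤ aseq (n+1) := by
    rw [aseq_eq, aseq_eq, SS_succ]
    apply SS_mono
    intro L
    unfold MM
    split_ifs
    · simp
    · simp
  exact_mod_cast this

lemma upper : ∃ C : ℝ, 0 < C ∧ ∀ t : ℕ, (aseq (2*t+1) : ℝ) ≤ C * (2 + 2 * √2) ^ t := by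
  have hs : √2 ^ 2 = 2 := Real.sq_sqrt (by norm_num)
  have hs1 : 1.4 < √2 := Real.lt_sqrt_of_sq_lt (by norm_num)
  set s := √2
  set h : ℕ → ℝ := fun L => 2 * s ^ L + 0 * (2 + s) ^ L - s with hh
  have key : ∀ t, SS (2*t+1) h = s * (2 + 2 * s) ^ t := by
    intro t
    induction t with
    | zero => rw [SS_one]; simp [hh]; ring
    | succ t ih =>
      rw [show 2 * (t+1) + 1 = 2*t+1+1+1 by ring, SS_succ, SS_succ]
      have : MM (2*t+1) (MM (2*t+1+1) h) = fun L => (s * (2 + s)) * h L := by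
        funext L
        exact eig s (2+s) 2 0 s (by linarith) (by ring_nf; nlinarith) (by ring)
          (2*t+1) ⟨t, rfl⟩ L
      rw [this, SS_smul, ih, pow_succ]
      have : s * (2 + s) = 2 + 2 * s := by linarith
      rw [this]; ring
  refine ⟨2 * s, by linarith, fun t => ?_⟩
  rw [aseq_eq, mul_assoc, ← key, ← SS_smul]
  apply SS_mono
  intro L
  have h1 : 1 ≤ s ^ L := one_le_pow₀ (by linarith)
  have hs2 : s < 1.5 := by nlinarith
  simp only [hh]
  linarith

lemma lower (x : ℝ) (hx : √2 < x) (hx2 : x < 2) :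
    ∃ K : ℝ, 0 < K ∧ ∀ t : ℕ, K * (x ^ 2 / (x - 1)) ^ t ≤ (aseq (2*t+1) : ℝ) := by
  have hs1 : 1.4 < √2 := Real.lt_sqrt_of_sq_lt (by norm_num)
  have hxx : 2 < x ^ 2 := (Real.sqrt_lt' (by linarith)).1 hx
  have hx1 : 0 < x - 1 := by linarith
  have hx0 : 0 < x := by linarith
  obtain ⟨z, hz⟩ : ∃ z, z = x / (x - 1) := ⟨_, rfl⟩
  have hz0 : 0 < z := by rw [hz]; positivity
  have hxz : x * z = x + z := by rw [hz]; field_simp; ring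
  have hzx : x < z := by rw [hz, lt_div_iff₀ hx1]; nlinarith
  have hl : x ^ 2 / (x - 1) = x * z := by rw [hz]; ring
  obtain ⟨α, hα⟩ : ∃ α, α = z + 2 / x - 2 := ⟨_, rfl⟩
  obtain ⟨β, hβ⟩ : ∃ β, β = 2 / x - x := ⟨_, rfl⟩
  have hβ0 : β < 0 := by rw [hβ, sub_neg, div_lt_iff₀ hx0]; nlinarith
  have hαx : α * x = z * x + 2 - 2 * x := by rw [hα]; field_simp
  have hβx : β * x = 2 - x ^ 2 := by rw [hβ]; field_simp
  set h : ℕ → ℝ := fun L => α * x ^ L + β * z ^ L - (z - x) with hh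
  have e1 : α * x + β * z = 2 * (z - x) := by
    have : x * (α * x + β * z) = x * (2 * (z - x)) := by
      linear_combination x * hαx + z * hβx - 2 * hxz
    exact mul_left_cancel₀ hx0.ne' this
  have e0 : x * z * (α + β - (z - x)) = 2 * (z - x) := by
    linear_combination z * hαx + z * hβx - 2 * hxz
  have hE : ∀ n, Odd n → ∀ L, MM n (MM (n+1) h) L = x * z * h L := fun n hn L =>
    eig x z α β (z - x) hxz e0 e1 n hn L
  have hpos1 : 0 < h 1 := by simp only [hh, pow_one]; linarith
  -- eventually nonpositive
  have hev : ∃ L0, ∀ L ≥ L0, h L ≤ 0 := by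
    have ht : Filter.Tendsto (fun L : ℕ => α * (x / z) ^ L) Filter.atTop (nhds (α * 0)) :=
      (tendsto_pow_atTop_nhds_zero_of_lt_one (by positivity)
        ((div_lt_one hz0).2 hzx)).const_mul α
    rw [mul_zero] at ht
    obtain ⟨L0, hL0⟩ := Filter.eventually_atTop.1
      (ht.eventually (gt_mem_nhds (show (0:ℝ) < -β by linarith)))
    refine ⟨L0, fun L hL => ?_⟩
    have h1 := hL0 L hL
    have h2 : α * x ^ L + β * z ^ L = z ^ L * (α * (x / z) ^ L + β) := by
      rw [div_pow]; field_simp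
    have h3 : z ^ L * (α * (x / z) ^ L + β) ≤ 0 :=
      mul_nonpos_of_nonneg_of_nonpos (by positivity) (by linarith)
    simp only [hh]
    linarith
  obtain ⟨L0, hL0⟩ := hev
  set u : ℕ → ℝ := fun L => max (h L) 0 with hu
  have hu0 : ∀ L, 0 ≤ u L := fun L => le_max_right _ _
  have huh : ∀ L, h L ≤ u L := fun L => le_max_left _ _
  set C : ℝ := 1 + ∑ L ∈ Finset.range L0, u L with hC
  have hC0 : 0 < C := by
    have : 0 ≤ ∑ L ∈ Finset.range L0, u L := Finset.sum_nonneg fun L _ => hu0 L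
    linarith
  have huC : ∀ L, u L ≤ C := by
    intro L
    by_cases hL : L < L0
    · have := Finset.single_le_sum (f := u) (fun i _ => hu0 i) (Finset.mem_range.2 hL)
      linarith
    · have : u L = 0 := max_eq_right (hL0 L (by omega))
      linarith
  have hstep : ∀ n, Odd n → ∀ L, x * z * u L ≤ MM n (MM (n+1) u) L := by
    intro n hn L
    rw [MM_two n hn]
    have hnn : 0 ≤ ∑ k ∈ Finset.range (L+1), u (k+1) := Finset.sum_nonneg fun k _ => hu0 _
    have hmul : (0:ℝ) ≤ L * u 1 := mul_nonneg (Nat.cast_nonneg _) (hu0 _)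
    rcases le_total (h L) 0 with hle | hle
    · have : u L = 0 := max_eq_right hle
      rw [this, mul_zero]
      have := hu0 1
      linarith
    · have : u L = h L := max_eq_left hle
      rw [this, ← hE n hn L, MM_two n hn]
      have hsum : ∑ k ∈ Finset.range (L+1), h (k+1) ≤ ∑ k ∈ Finset.range (L+1), u (k+1) :=
        Finset.sum_le_sum fun k _ => huh _
      have hm : (L:ℝ) * h 1 ≤ L * u 1 := mul_le_mul_of_nonneg_left (huh 1) (Nat.cast_nonneg _)
      have := huh 1
      linarith
  have key : ∀ t, h 1 * (x * z) ^ t ≤ SS (2*t+1) u := by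
    intro t
    induction t with
    | zero => rw [SS_one]; simpa using huh 1
    | succ t ih =>
      rw [show 2 * (t+1) + 1 = 2*t+1+1+1 by ring, SS_succ, SS_succ]
      refine le_trans ?_ (SS_mono _ (hstep (2*t+1) ⟨t, rfl⟩))
      rw [SS_smul, pow_succ]
      have := mul_le_mul_of_nonneg_left ih (show 0 ≤ x * z by positivity)
      linarith
  refine ⟨h 1 / C, by positivity, fun t => ?_⟩
  rw [hl, div_mul_eq_mul_div, div_le_iff₀ hC0, mul_comm _ C, aseq_eq, ← SS_smul]
  refine (key t).trans (SS_mono _ fun L => ?_)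
  simpa using huC L

lemma ratio_lt (a b K : ℝ) (ha : 0 ≤ a) (hab : a < b) (hK : 0 < K) :
    ∃ T : ℕ, ∀ t ≥ T, a ^ t < K * b ^ t := by
  have hb : 0 < b := by linarith
  have ht : Filter.Tendsto (fun t : ℕ => (a / b) ^ t) Filter.atTop (nhds 0) :=
    tendsto_pow_atTop_nhds_zero_of_lt_one (by positivity) ((div_lt_one hb).2 hab)
  obtain ⟨T, hT⟩ := Filter.eventually_atTop.1 (ht.eventually (gt_mem_nhds hK))
  refine ⟨T, fun t h => ?_⟩
  have := hT t h
  rwa [div_pow, div_lt_iff₀ (by positivity)] at this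

lemma low_final (c : ℝ) (hc : 0 < c) (hc2 : c < √(2 + 2 * √2)) :
    ∃ N : ℕ, ∀ n : ℕ, N ≤ n → c ^ n < (aseq n : ℝ) := by
  have hs : √2 ^ 2 = 2 := Real.sq_sqrt (by norm_num)
  have hs1 : 1.4 < √2 := Real.lt_sqrt_of_sq_lt (by norm_num)
  have hs2 : √2 < 2 := by nlinarith
  have hcc : c ^ 2 < 2 + 2 * √2 := (Real.lt_sqrt hc.le).1 hc2
  obtain ⟨x, hx, hx2, hcx⟩ : ∃ x, √2 < x ∧ x < 2 ∧ c ^ 2 < x ^ 2 / (x - 1) := by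
    have hcont : ContinuousAt (fun x : ℝ => x ^ 2 / (x - 1)) (√2) := by
      apply ContinuousAt.div (by fun_prop) (by fun_prop)
      linarith
    have hv : √2 ^ 2 / (√2 - 1) = 2 + 2 * √2 := by
      rw [div_eq_iff (by linarith)]; nlinarith
    have h1 : ∀ᶠ x in nhdsWithin (√2) (Set.Ioi (√2)), c ^ 2 < x ^ 2 / (x - 1) :=
      (hcont.eventually (lt_mem_nhds (by simpa only [hv] using hcc))).filter_mono nhdsWithin_le_nhds
    have h2 : ∀ᶠ x in nhdsWithin (√2) (Set.Ioi (√2)), x < 2 :=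
      (gt_mem_nhds hs2).filter_mono nhdsWithin_le_nhds
    obtain ⟨x, ⟨ha, hb⟩, hd⟩ := ((h1.and h2).and self_mem_nhdsWithin).exists
    exact ⟨x, hd, hb, ha⟩
  obtain ⟨K, hK, hlow⟩ := lower x hx hx2
  set M := max c (c ^ 2)
  have hM : 0 < M := lt_max_of_lt_left hc
  obtain ⟨T, hT⟩ := ratio_lt (c ^ 2) (x ^ 2 / (x - 1)) (K / M) (by positivity) hcx (by positivity)
  refine ⟨2 * T + 1, fun n hn => ?_⟩
  obtain ⟨t, ht⟩ : ∃ t, n = 2 * t + 1 ∨ n = 2 * t + 2 := ⟨(n - 1) / 2, by omega⟩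
  have h1 := hT t (by omega)
  rw [div_mul_eq_mul_div, lt_div_iff₀ hM] at h1
  have h2 := hlow t
  have hp : 0 < (c ^ 2) ^ t := by positivity
  rcases ht with rfl | rfl
  · have : c ^ (2 * t + 1) ≤ (c ^ 2) ^ t * M := by
      rw [pow_succ, pow_mul]
      exact mul_le_mul_of_nonneg_left (le_max_left _ _) hp.le
    linarith
  · have : c ^ (2 * t + 2) ≤ (c ^ 2) ^ t * M := by
      rw [pow_add, pow_mul]
      exact mul_le_mul_of_nonneg_left (le_max_right _ _) hp.le
    have h3 : (aseq (2*t+1) : ℝ) ≤ aseq (2*t+2) := by exact_mod_cast aseq_succ_le (2*t+1)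
    linarith

lemma up_final (c : ℝ) (hc2 : √(2 + 2 * √2) < c) :
    ∃ N : ℕ, ∀ n : ℕ, N ≤ n → (aseq n : ℝ) < c ^ n := by
  have hs0 : 0 ≤ √2 := Real.sqrt_nonneg _
  have hc : 0 < c := lt_of_le_of_lt (Real.sqrt_nonneg _) hc2
  have hcc : 2 + 2 * √2 < c ^ 2 := (Real.sqrt_lt' hc).1 hc2
  have hc1 : 1 ≤ c := by nlinarith
  obtain ⟨C, hC, hup⟩ := upper
  obtain ⟨T, hT⟩ := ratio_lt (2 + 2 * √2) (c ^ 2) (1 / (C * (2 + 2 * √2))) (by positivity) hcc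
    (by positivity)
  refine ⟨2 * T + 1, fun n hn => ?_⟩
  obtain ⟨t, ht⟩ : ∃ t, n = 2 * t + 1 ∨ n = 2 * t + 2 := ⟨(n - 1) / 2, by omega⟩
  have h1 := hT t (by omega)
  rw [div_mul_eq_mul_div, one_mul, lt_div_iff₀ (by positivity), ← pow_mul] at h1
  have h2 := hup (t+1)
  rw [pow_succ] at h2
  have h3 : (aseq (2*t+2) : ℝ) ≤ aseq (2*(t+1)+1) := by exact_mod_cast aseq_succ_le (2*t+2)
  have h4 : (aseq (2*t+1) : ℝ) ≤ aseq (2*t+2) := by exact_mod_cast aseq_succ_le (2*t+1)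
  have hm : c ^ (2 * t) ≤ c ^ n := pow_le_pow_right₀ hc1 (by omega)
  rcases ht with rfl | rfl <;> linarith

/-- `a(n)^{1/n} → √(2+2√2)`, and for every `0 < c < √(2+2√2)`
there is `N` with `a(n) > c^n` for all `n ≥ N`. -/
theorem stmt17 :
    Filter.Tendsto
      (fun n : ℕ => (aseq n : ℝ) ^ (1 / (n : ℝ)))
      Filter.atTop (nhds (Real.sqrt (2 + 2 * Real.sqrt 2))) ∧
    ∀ c : ℝ, 0 < c → c < Real.sqrt (2 + 2 * Real.sqrt 2) →
      ∃ N : ℕ, ∀ n : ℕ, N ≤ n → c ^ n < (aseq n : ℝ) := by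
  refine ⟨?_, low_final⟩
  have hroot : ∀ (c : ℝ) (n : ℕ), 0 ≤ c → 1 ≤ n → (c ^ n) ^ (1 / (n:ℝ)) = c := by
    intro c n hc hn
    rw [one_div]
    exact Real.pow_rpow_inv_natCast hc (by omega)
  have hpos : 0 < √(2 + 2 * √2) := Real.sqrt_pos.2 (by positivity)
  rw [tendsto_order]
  constructor
  · intro a ha
    obtain ⟨c, hc1, hc2⟩ := exists_between (max_lt ha hpos)
    have hc0 : 0 < c := lt_of_le_of_lt (le_max_right _ _) hc1
    obtain ⟨N, hN⟩ := low_final c hc0 hc2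
    filter_upwards [Filter.eventually_ge_atTop (max N 1)] with n hn
    have h1 := hN n (le_of_max_le_left hn)
    have hn1 : 1 ≤ n := le_of_max_le_right hn
    have := Real.rpow_le_rpow (by positivity) h1.le (show 0 ≤ 1 / (n:ℝ) by positivity)
    rw [hroot c n hc0.le hn1] at this
    exact lt_of_lt_of_le (lt_of_le_of_lt (le_max_left _ _) hc1) this
  · intro a ha
    obtain ⟨c, hc1, hc2⟩ := exists_between ha
    have hc0 : 0 < c := hpos.trans hc1
    obtain ⟨N, hN⟩ := up_final c hc1
    filter_upwards [Filter.eventually_ge_atTop (max N 1)] with n hn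
    have h1 := hN n (le_of_max_le_left hn)
    have hn1 : 1 ≤ n := le_of_max_le_right hn
    have := Real.rpow_le_rpow (by positivity) h1.le (show 0 ≤ 1 / (n:ℝ) by positivity)
    rw [hroot c n hc0.le hn1] at this
    exact lt_of_le_of_lt this hc2
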